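/- Let Y be a real Gaussian random variable with mean μ and standard deviation σ > 0, and let X = max(Y, 0). Then σ²·P(Y > 0) / Var(X) = C(μ/(√2·σ)). -/

import Mathlib

/-!
Write `R = μ / (√2 σ)`. The law of `Y` is the image of the centred Gaussian of variance `1/2`,
whose density is `exp (-t²) / √π`, under `t ↦ √2 σ (t + R)` (`gaussianReal_eq_map`). Hence
`P (Y > 0) = erfc (-R) / 2`, and `Var (max Y 0)` is `2 σ²` times the variance of `max (t + R) 0`.
The two moments of `max (t + R) 0` reduce to integrals over `(-R, ∞)` of `exp (-t²)` times a
polynomial of degree at most two, which are computed by integration by parts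
(`integral_Ioi_mul_exp`, `integral_Ioi_sq_mul_exp`). The result is
`Var (max (t + R) 0) = D R / 4`, so both sides equal `erfc (-R) / D R`; this last cancellation
only needs `σ ≠ 0`.
-/

open MeasureTheory Filter

/-- The complementary error function. -/
noncomputable def erfc (x : ℝ) : ℝ :=
  2 / Real.sqrt Real.pi * ∫ t in Set.Ioi x, Real.exp (-t ^ 2)

/-- The denominator of the explosion-rate bound. -/
noncomputable def D (R : ℝ) : ℝ :=
  (1 + 2 * R ^ 2) * erfc (-R) + 2 * R * Real.exp (-R ^ 2) / Real.sqrt Real.pi -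
    (R * erfc (-R) + Real.exp (-R ^ 2) / Real.sqrt Real.pi) ^ 2

/-- The explosion-rate bound. -/
noncomputable def C (R : ℝ) : ℝ := erfc (-R) / D R

section Auxiliary

open ProbabilityTheory

lemma integrable_exp_neg_sq : Integrable (fun t : ℝ => Real.exp (-t ^ 2)) := by
  simpa using integrable_exp_neg_mul_sq (b := 1) one_pos

lemma integrable_mul_exp_neg_sq : Integrable (fun t : ℝ => t * Real.exp (-t ^ 2)) := by
  simpa using integrable_mul_exp_neg_mul_sq (b := 1) one_pos

lemma integrable_sq_mul_exp_neg_sq : Integrable (fun t : ℝ => t ^ 2 * Real.exp (-t ^ 2)) := by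
  simpa using integrable_rpow_mul_exp_neg_mul_sq (b := 1) one_pos (s := 2) (by norm_num)

lemma hasDerivAt_exp_neg_sq (x : ℝ) :
    HasDerivAt (fun t : ℝ => Real.exp (-t ^ 2)) (-2 * (x * Real.exp (-x ^ 2))) x := by
  convert (hasDerivAt_pow 2 x).fun_neg.exp using 1
  push_cast; ring

lemma integral_Ioi_mul_exp (c : ℝ) :
    ∫ t in Set.Ioi c, t * Real.exp (-t ^ 2) = Real.exp (-c ^ 2) / 2 := by
  have hi : IntegrableOn (fun x : ℝ => -2 * (x * Real.exp (-x ^ 2))) (Set.Ioi c) :=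
    (integrable_mul_exp_neg_sq.const_mul (-2)).integrableOn
  have ht := tendsto_zero_of_hasDerivAt_of_integrableOn_Ioi
    (fun x _ => hasDerivAt_exp_neg_sq x) hi integrable_exp_neg_sq.integrableOn
  have := integral_Ioi_of_hasDerivAt_of_tendsto' (fun x _ => hasDerivAt_exp_neg_sq x) hi ht
  rw [integral_const_mul] at this
  linarith

lemma integral_Ioi_sq_mul_exp (c : ℝ) :
    ∫ t in Set.Ioi c, t ^ 2 * Real.exp (-t ^ 2) =
      c * Real.exp (-c ^ 2) / 2 + (∫ t in Set.Ioi c, Real.exp (-t ^ 2)) / 2 := by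
  have hd : ∀ x : ℝ, HasDerivAt (fun t : ℝ => t * Real.exp (-t ^ 2))
      (Real.exp (-x ^ 2) - 2 * (x ^ 2 * Real.exp (-x ^ 2))) x := fun x => by
    refine ((hasDerivAt_id' x).fun_mul (hasDerivAt_exp_neg_sq x)).congr_deriv ?_
    ring
  have hi : IntegrableOn (fun x : ℝ => Real.exp (-x ^ 2) - 2 * (x ^ 2 * Real.exp (-x ^ 2)))
      (Set.Ioi c) :=
    (integrable_exp_neg_sq.sub (integrable_sq_mul_exp_neg_sq.const_mul 2)).integrableOn
  have ht := tendsto_zero_of_hasDerivAt_of_integrableOn_Ioi (fun x _ => hd x) hi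
    integrable_mul_exp_neg_sq.integrableOn
  have := integral_Ioi_of_hasDerivAt_of_tendsto' (fun x _ => hd x) hi ht
  rw [integral_sub integrable_exp_neg_sq.integrableOn
    (integrable_sq_mul_exp_neg_sq.const_mul 2).integrableOn, integral_const_mul] at this
  linarith

lemma integral_gaussianReal_half (f : ℝ → ℝ) :
    ∫ t, f t ∂(gaussianReal 0 (1 / 2)) =
      (Real.sqrt Real.pi)⁻¹ * ∫ t, Real.exp (-t ^ 2) * f t := by
  rw [integral_gaussianReal_eq_integral_smul (by norm_num), ← integral_const_mul]
  congr 1 with t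
  have h : 2 * Real.pi * (((1 / 2 : NNReal)) : ℝ) = Real.pi := by push_cast; ring
  have h' : -(t - 0) ^ 2 / (2 * (((1 / 2 : NNReal)) : ℝ)) = -t ^ 2 := by push_cast; ring
  rw [gaussianPDFReal, h, h', smul_eq_mul, mul_assoc]

/-- Standardisation: a Gaussian is an affine image of the Gaussian with density
`exp (-t²) / √π`. -/
lemma gaussianReal_eq_map (μ σ : ℝ) (hσ : 0 < σ) :
    gaussianReal μ ⟨σ ^ 2, sq_nonneg σ⟩ =
      (gaussianReal 0 (1 / 2)).map
        (fun t => Real.sqrt 2 * σ * (t + μ / (Real.sqrt 2 * σ))) := by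
  have h : (fun t : ℝ => Real.sqrt 2 * σ * (t + μ / (Real.sqrt 2 * σ))) =
      (fun x => x + μ) ∘ (fun t => Real.sqrt 2 * σ * t) := by
    ext t
    simp only [Function.comp]
    field_simp
  rw [h, ← Measure.map_map (by fun_prop) (by fun_prop), gaussianReal_map_const_mul,
    gaussianReal_map_add_const]
  congr 1
  · simp
  · apply NNReal.coe_injective
    change σ ^ 2 = (Real.sqrt 2 * σ) ^ 2 * ((1 / 2 : NNReal) : ℝ)
    rw [mul_pow, Real.sq_sqrt (by norm_num)]
    push_cast; ring

lemma gaussianReal_half_Ioi (R : ℝ) :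
    (gaussianReal 0 (1 / 2)).real (Set.Ioi (-R)) = erfc (-R) / 2 := by
  rw [← integral_indicator_one measurableSet_Ioi, integral_gaussianReal_half, erfc,
    ← integral_indicator measurableSet_Ioi]
  have h : ∀ t : ℝ, Real.exp (-t ^ 2) * (Set.Ioi (-R)).indicator 1 t =
      (Set.Ioi (-R)).indicator (fun t => Real.exp (-t ^ 2)) t := fun t => by
    by_cases ht : t ∈ Set.Ioi (-R) <;> simp [Set.indicator, ht]
  simp only [h]
  ring

lemma integral_relu_pow (R : ℝ) (n : ℕ) (hn : n ≠ 0) :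
    ∫ t, (max (t + R) 0) ^ n ∂(gaussianReal 0 (1 / 2)) =
      (Real.sqrt Real.pi)⁻¹ * ∫ t in Set.Ioi (-R), Real.exp (-t ^ 2) * (t + R) ^ n := by
  rw [integral_gaussianReal_half, ← integral_indicator measurableSet_Ioi]
  congr 2 with t
  by_cases h : t ∈ Set.Ioi (-R)
  · rw [Set.indicator_of_mem h, max_eq_left]
    rw [Set.mem_Ioi] at h; linarith
  · rw [Set.indicator_of_notMem h, max_eq_right, zero_pow hn, mul_zero]
    rw [Set.mem_Ioi] at h; linarith

lemma integral_relu (R : ℝ) :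
    ∫ t, max (t + R) 0 ∂(gaussianReal 0 (1 / 2)) =
      (R * erfc (-R) + Real.exp (-R ^ 2) / Real.sqrt Real.pi) / 2 := by
  have h := integral_relu_pow R 1 one_ne_zero
  simp only [pow_one] at h
  have e : ∀ t : ℝ, Real.exp (-t ^ 2) * (t + R) =
      t * Real.exp (-t ^ 2) + R * Real.exp (-t ^ 2) := fun t => by ring
  simp only [e] at h
  rw [h, integral_add integrable_mul_exp_neg_sq.integrableOn
    (integrable_exp_neg_sq.const_mul R).integrableOn, integral_const_mul,
    integral_Ioi_mul_exp, erfc, neg_sq]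
  ring

lemma integral_relu_sq (R : ℝ) :
    ∫ t, (max (t + R) 0) ^ 2 ∂(gaussianReal 0 (1 / 2)) =
      ((1 + 2 * R ^ 2) * erfc (-R) + 2 * R * Real.exp (-R ^ 2) / Real.sqrt Real.pi) / 4 := by
  have e : ∀ t : ℝ, Real.exp (-t ^ 2) * (t + R) ^ 2 =
      t ^ 2 * Real.exp (-t ^ 2) +
        (2 * R * (t * Real.exp (-t ^ 2)) + R ^ 2 * Real.exp (-t ^ 2)) := fun t => by ring
  have i1 := integrable_mul_exp_neg_sq.const_mul (2 * R)
  have i0 := integrable_exp_neg_sq.const_mul (R ^ 2)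
  rw [integral_relu_pow R 2 two_ne_zero]
  simp only [e]
  rw [integral_add integrable_sq_mul_exp_neg_sq.integrableOn (i1.fun_add i0).integrableOn,
    integral_add i1.integrableOn i0.integrableOn, integral_const_mul, integral_const_mul,
    integral_Ioi_sq_mul_exp, integral_Ioi_mul_exp, erfc, neg_sq]
  ring

lemma variance_relu (R : ℝ) :
    variance (fun t => max (t + R) 0) (gaussianReal 0 (1 / 2)) = D R / 4 := by
  have hm : MemLp (fun t : ℝ => max (t + R) 0) 2 (gaussianReal 0 (1 / 2)) :=
    ((memLp_id_gaussianReal 2).add (memLp_const R)).pos_part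
  rw [variance_eq_sub hm]
  simp only [Pi.pow_apply]
  rw [integral_relu_sq, integral_relu, D]
  ring

end Auxiliary

open ProbabilityTheory in
theorem explosion_rate_eq_C {Ω : Type*} [MeasurableSpace Ω] (P : Measure Ω)
    [IsProbabilityMeasure P] (μ σ : ℝ) (hσ : 0 < σ) (Y : Ω → ℝ)
    (hY : P.map Y = gaussianReal μ ⟨σ ^ 2, sq_nonneg σ⟩) :
    σ ^ 2 * (P {ω | 0 < Y ω}).toReal / variance (fun ω => max (Y ω) 0) P =
      C (μ / (Real.sqrt 2 * σ)) := by
  -- A map that is not a.e. measurable pushes `P` forward to the zero measure.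
  have hYm : AEMeasurable Y P := by
    apply aemeasurable_of_map_neZero
    rw [hY]
    have h (v : NNReal) : gaussianReal μ v ≠ 0 := IsProbabilityMeasure.ne_zero _
    exact ⟨h _⟩
  rw [gaussianReal_eq_map μ σ hσ] at hY
  set R := μ / (Real.sqrt 2 * σ)
  have ha : 0 < Real.sqrt 2 * σ := by positivity
  have hprob : (P {ω | 0 < Y ω}).toReal = erfc (-R) / 2 := by
    have h1 : P {ω | 0 < Y ω} = P.map Y (Set.Ioi 0) :=
      (Measure.map_apply_of_aemeasurable hYm measurableSet_Ioi).symm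
    have h2 : (fun t => Real.sqrt 2 * σ * (t + R)) ⁻¹' Set.Ioi 0 = Set.Ioi (-R) := by
      ext t
      simp only [Set.mem_preimage, Set.mem_Ioi, mul_pos_iff_of_pos_left ha]
      exact neg_lt_iff_pos_add.symm
    rw [h1, hY, Measure.map_apply (by fun_prop) measurableSet_Ioi, h2]
    exact gaussianReal_half_Ioi R
  have hvar : variance (fun ω => max (Y ω) 0) P = σ ^ 2 * (D R / 2) := by
    have h1 : variance (fun ω => max (Y ω) 0) P = variance (fun y : ℝ => max y 0) (P.map Y) :=
      (variance_map (X := fun y : ℝ => max y 0) (by fun_prop) hYm).symm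
    have h2 : (fun y : ℝ => max y 0) ∘ (fun t => Real.sqrt 2 * σ * (t + R)) =
        fun t => Real.sqrt 2 * σ * max (t + R) 0 := by
      ext t
      simp only [Function.comp, mul_max_of_nonneg _ _ ha.le, mul_zero]
    rw [h1, hY, variance_map (by fun_prop) (by fun_prop), h2, variance_const_mul, variance_relu,
      mul_pow, Real.sq_sqrt (by norm_num)]
    ring
  rw [hprob, hvar, C, mul_div_mul_left _ _ (by positivity), div_div_div_cancel_right₀ two_ne_zero]
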